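/- Let X be a topological space, T : X → X a continuous map, and X_1, X_2 extension closed subspaces of X such that X = X_1 ∪ X_2 and T(X_i) ⊆ X_i for i = 1, 2. Then h_top(T) = max{ h_top(T|_{X_1}), h_top(T|_{X_2}) }. -/

import Mathlib

open Set Filter Topology ENNReal

variable {X : Type*}

/-- `α` is an open cover of `X`: a family of open sets whose union is `X`. -/
def IsOpenCover [TopologicalSpace X] (α : Set (Set X)) : Prop :=
  (∀ U ∈ α, IsOpen U) ∧ ⋃₀ α = univ

/-- `α ≺ β`: every member of `α` is contained in some member of `β`. -/
def Refines (α β : Set (Set X)) : Prop := ∀ A ∈ α, ∃ B ∈ β, A ⊆ B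

/-- The meet `α ∧ β = {A ∩ B : A ∈ α, B ∈ β}`. -/
def meetCov (α β : Set (Set X)) : Set (Set X) := Set.image2 (· ∩ ·) α β

/-- `N(α)`: the minimal cardinality of a finite subfamily of `α` covering `X`
(`∞` if there is none), as an element of `[0,∞]`. -/
noncomputable def Ncov (α : Set (Set X)) : ℝ≥0∞ :=
  ⨅ (β : Finset (Set X)) (_ : (↑β : Set (Set X)) ⊆ α ∧ ⋃₀ (↑β : Set (Set X)) = univ),
    (β.card : ℝ≥0∞)

/-- The logarithm `[0,∞] → [0,∞]`, with `log 0 = 0` and `log ∞ = ∞`. -/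
noncomputable def logE (x : ℝ≥0∞) : ℝ≥0∞ :=
  if x = ⊤ then ⊤ else ENNReal.ofReal (Real.log x.toReal)

/-- `H(α) = log N(α)`. -/
noncomputable def Hcov (α : Set (Set X)) : ℝ≥0∞ := logE (Ncov α)

/-- `α ∧ T⁻¹α ∧ ⋯ ∧ T^{-n}α`. -/
def covProd (T : X → X) (α : Set (Set X)) : ℕ → Set (Set X)
  | 0 => α
  | n + 1 => meetCov (covProd T α n) ((fun U => T^[n + 1] ⁻¹' U) '' α)

/-- `h_top(T, α) = limsup_n (1/n)·H(α ∧ T⁻¹α ∧ ⋯ ∧ T^{-(n-1)}α)`. -/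
noncomputable def htopRel (T : X → X) (α : Set (Set X)) : ℝ≥0∞ :=
  Filter.atTop.limsup fun n : ℕ => Hcov (covProd T α n) / ((n : ℝ≥0∞) + 1)

/-- The topological entropy `h_top(T) = sup_α h_top(T, α)` over all open covers `α`. -/
noncomputable def htop [TopologicalSpace X] (T : X → X) : ℝ≥0∞ :=
  ⨆ (α : Set (Set X)) (_ : IsOpenCover α), htopRel T α

/-- `Y ⊆ X` is extension closed: every open cover of the subspace `Y` is of the form
`Y ∧ α` for some open cover `α` of `X`. -/
def ExtClosed [TopologicalSpace X] (Y : Set X) : Prop :=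
  ∀ β : Set (Set ↥Y), IsOpenCover β →
    ∃ α : Set (Set X), IsOpenCover α ∧
      β = (fun A : Set X => (Subtype.val ⁻¹' A : Set ↥Y)) '' α

/-!
An optimal subcover of `α ∧ ⋯ ∧ T⁻ⁿα` pulls back to each invariant piece `Xᵢ`, and conversely the
optimal subcovers on the `k` pieces together form a subcover on the whole space. Hence the numbers
`N` on the pieces are at most the number on `X`, which is at most their sum, so `H` on `X` exceeds
the largest `H` on a piece by at most `log k`. This error is independent of `n` and disappears after
division by `n + 1`. Extension closedness makes every open cover of a piece the trace of one of `X`.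
-/

theorem logE_zero : logE 0 = 0 := by simp [logE]

theorem logE_natCast_ne_top (n : ℕ) : logE n ≠ ⊤ := by simp [logE]

theorem logE_mono : Monotone logE := by
  intro x y hxy
  rcases eq_or_ne y ⊤ with rfl | hy
  · simp [logE]
  rcases eq_or_ne x 0 with rfl | hx₀
  · simp [logE_zero]
  have hx : x ≠ ⊤ := ne_top_of_le_ne_top hy hxy
  simp only [logE, hx, hy, if_false]
  exact ENNReal.ofReal_le_ofReal <|
    Real.log_le_log (ENNReal.toReal_pos hx₀ hx) (ENNReal.toReal_mono hy hxy)

theorem logE_mul_le (x y : ℝ≥0∞) : logE (x * y) ≤ logE x + logE y := by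
  rcases eq_or_ne x ⊤ with rfl | hx
  · simp [logE]
  rcases eq_or_ne y ⊤ with rfl | hy
  · simp [logE]
  rcases eq_or_ne x 0 with rfl | hx₀
  · simp [logE_zero]
  rcases eq_or_ne y 0 with rfl | hy₀
  · simp [logE_zero]
  simp only [logE, hx, hy, ENNReal.mul_ne_top hx hy, if_false, ENNReal.toReal_mul]
  rw [Real.log_mul (ENNReal.toReal_pos hx₀ hx).ne' (ENNReal.toReal_pos hy₀ hy).ne']
  exact ENNReal.ofReal_add_le

theorem logE_iSup {ι : Type*} [Finite ι] (x : ι → ℝ≥0∞) :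
    logE (⨆ i, x i) = ⨆ i, logE (x i) := by
  have := Fintype.ofFinite ι
  simpa only [Finset.sup_univ_eq_iSup] using!
    Finset.apply_sup_eq_sup_comp_of_linearOrder (s := Finset.univ) (f := x) logE logE_mono logE_zero

theorem logE_sum_le {ι : Type*} [Fintype ι] (x : ι → ℝ≥0∞) :
    logE (∑ i, x i) ≤ logE (Fintype.card ι) + ⨆ i, logE (x i) := by
  have hsum : ∑ i, x i ≤ Fintype.card ι * ⨆ i, x i := by
    simpa using Finset.sum_le_card_nsmul Finset.univ x _ fun i _ => le_iSup x i
  calc logE (∑ i, x i) ≤ logE (Fintype.card ι * ⨆ i, x i) := logE_mono hsum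
    _ ≤ logE (Fintype.card ι) + logE (⨆ i, x i) := logE_mul_le _ _
    _ = logE (Fintype.card ι) + ⨆ i, logE (x i) := by rw [logE_iSup]

theorem limsup_iSup_of_finite {ι κ R : Type*} [Finite ι] [CompleteLinearOrder R]
    (l : Filter κ) (u : ι → κ → R) :
    limsup (fun k => ⨆ i, u i k) l = ⨆ i, limsup (u i) l := by
  have := Fintype.ofFinite ι
  simpa only [Finset.sup_univ_eq_iSup] using
    limsup_finset_sup (f := l) (s := Finset.univ) (F := u)

theorem Ncov_le_card {α : Set (Set X)} {β : Finset (Set X)} (hβ : (β : Set (Set X)) ⊆ α)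
    (hcover : ⋃₀ (β : Set (Set X)) = univ) : Ncov α ≤ β.card :=
  iInf₂_le β ⟨hβ, hcover⟩

theorem exists_card_eq_Ncov {α : Set (Set X)} (h : Ncov α ≠ ⊤) :
    ∃ β : Finset (Set X), (β : Set (Set X)) ⊆ α ∧ ⋃₀ (β : Set (Set X)) = univ ∧
      (β.card : ℝ≥0∞) = Ncov α := by
  let IsSubcover (β : Finset (Set X)) : Prop :=
    (β : Set (Set X)) ⊆ α ∧ ⋃₀ (β : Set (Set X)) = univ
  have hne : ∃ β, IsSubcover β := by
    by_contra! hnone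
    exact h (iInf₂_eq_top.2 fun β hβ => (hnone β hβ).elim)
  obtain ⟨β, hβ, hmin⟩ := exists_minimalFor_of_wellFoundedLT IsSubcover Finset.card hne
  have hle {δ : Finset (Set X)} (hδ : IsSubcover δ) : β.card ≤ δ.card :=
    (le_total β.card δ.card).elim id (hmin hδ)
  refine ⟨β, hβ.1, hβ.2, le_antisymm (le_iInf₂ fun δ hδ => ?_) (Ncov_le_card hβ.1 hβ.2)⟩
  exact_mod_cast hle hδ

theorem htopRel_le_htop [TopologicalSpace X] (T : X → X) {α : Set (Set X)} (hα : IsOpenCover α) :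
    htopRel T α ≤ htop T :=
  le_iSup₂ (f := fun α (_ : IsOpenCover α) => htopRel T α) α hα

section Pullback

variable {Y : Type*}

/-- The pullback `{f⁻¹A : A ∈ α}` of a family `α` along `f : Y → X`. When `f` is the inclusion of
a subset `Y` of `X`, this is the trace `Y ∧ α`, regarded as a family of subsets of `Y`. -/
def pullbackCov (f : Y → X) (α : Set (Set X)) : Set (Set Y) := preimage f '' α

theorem sUnion_pullbackCov (f : Y → X) (α : Set (Set X)) :
    ⋃₀ pullbackCov f α = f ⁻¹' ⋃₀ α := by
  rw [pullbackCov, sUnion_image, preimage_sUnion]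

theorem IsOpenCover.pullbackCov [TopologicalSpace X] [TopologicalSpace Y] {f : Y → X}
    (hf : Continuous f) {α : Set (Set X)} (hα : IsOpenCover α) :
    IsOpenCover (pullbackCov f α) :=
  ⟨forall_mem_image.2 fun A hA => (hα.1 A hA).preimage hf,
    by rw [sUnion_pullbackCov, hα.2, preimage_univ]⟩

theorem pullbackCov_meetCov (f : Y → X) (α β : Set (Set X)) :
    pullbackCov f (meetCov α β) = meetCov (pullbackCov f α) (pullbackCov f β) :=
  image_image2_distrib fun _ _ => preimage_inter

theorem pullbackCov_covProd {f : Y → X} {S : Y → Y} {T : X → X} (h : Function.Semiconj f S T)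
    (α : Set (Set X)) (n : ℕ) :
    pullbackCov f (covProd T α n) = covProd S (pullbackCov f α) n := by
  induction n with
  | zero => rfl
  | succ n ih =>
    have hiter (A : Set X) : f ⁻¹' (T^[n + 1] ⁻¹' A) = S^[n + 1] ⁻¹' (f ⁻¹' A) := by
      rw [← preimage_comp, ← preimage_comp, (h.iterate_right (n + 1)).comp_eq]
    simp only [covProd, pullbackCov_meetCov, ih]
    simp only [pullbackCov, image_image, hiter]

theorem Ncov_pullbackCov_le (f : Y → X) (α : Set (Set X)) :
    Ncov (pullbackCov f α) ≤ Ncov α := by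
  classical
  refine le_iInf₂ fun β ⟨hβ, hcover⟩ => ?_
  have hcoe : ((β.image (preimage f) : Finset (Set Y)) : Set (Set Y)) = pullbackCov f β :=
    Finset.coe_image
  calc Ncov (pullbackCov f α) ≤ (β.image (preimage f)).card :=
        Ncov_le_card (hcoe ▸ image_mono hβ)
          (by rw [hcoe, sUnion_pullbackCov, hcover, preimage_univ])
    _ ≤ β.card := by exact_mod_cast Finset.card_image_le

theorem exists_card_eq_Ncov_pullbackCov {f : Y → X} {α : Set (Set X)}
    (h : Ncov (pullbackCov f α) ≠ ⊤) :
    ∃ β : Finset (Set X), (β : Set (Set X)) ⊆ α ∧ range f ⊆ ⋃₀ (β : Set (Set X)) ∧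
      (β.card : ℝ≥0∞) = Ncov (pullbackCov f α) := by
  classical
  obtain ⟨δ, hδ, hcover, hcard⟩ := exists_card_eq_Ncov h
  obtain ⟨β, hβ, hinj, rfl⟩ :=
    Finset.exists_subset_injOn_image_eq_of_surjOn α δ hδ
  refine ⟨β, hβ, ?_, by rw [← hcard, Finset.card_image_of_injOn hinj]⟩
  rw [Finset.coe_image] at hcover
  exact range_subset_iff.2 fun y => (sUnion_pullbackCov f β ▸ hcover).ge (mem_univ y)

theorem htopRel_pullbackCov_le {f : Y → X} {S : Y → Y} {T : X → X} (h : Function.Semiconj f S T)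
    (α : Set (Set X)) : htopRel S (pullbackCov f α) ≤ htopRel T α := by
  refine limsup_le_limsup (Eventually.of_forall fun n => ENNReal.div_le_div_right ?_ _)
  rw [← pullbackCov_covProd h]
  exact logE_mono (Ncov_pullbackCov_le f _)

end Pullback

section JointlySurjective

variable {ι : Type*} {Y : ι → Type*} {f : ∀ i, Y i → X}

theorem Ncov_le_sum_pullbackCov [Fintype ι] (hf : ⋃ i, range (f i) = univ) (α : Set (Set X)) :
    Ncov α ≤ ∑ i, Ncov (pullbackCov (f i) α) := by
  classical
  rcases eq_or_ne (∑ i, Ncov (pullbackCov (f i) α)) ⊤ with hsum | hsum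
  · exact hsum ▸ le_top
  have hfin (i : ι) : Ncov (pullbackCov (f i) α) ≠ ⊤ :=
    ENNReal.sum_ne_top.1 hsum i (Finset.mem_univ i)
  choose β hβ hcover hcard using fun i => exists_card_eq_Ncov_pullbackCov (hfin i)
  have hsub : ((Finset.univ.biUnion β : Finset (Set X)) : Set (Set X)) ⊆ α := by
    simpa using hβ
  have hunion : ⋃₀ ((Finset.univ.biUnion β : Finset (Set X)) : Set (Set X)) = univ := by
    rw [← univ_subset_iff, ← hf]
    exact iUnion_subset fun i => (hcover i).trans <| sUnion_mono <| by
      exact_mod_cast Finset.subset_biUnion_of_mem β (Finset.mem_univ i)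
  calc Ncov α ≤ (Finset.univ.biUnion β).card := Ncov_le_card hsub hunion
    _ ≤ ∑ i, ((β i).card : ℝ≥0∞) := by exact_mod_cast Finset.card_biUnion_le
    _ = ∑ i, Ncov (pullbackCov (f i) α) := by simp only [hcard]

theorem Hcov_le_add_iSup_pullbackCov [Fintype ι] (hf : ⋃ i, range (f i) = univ)
    (α : Set (Set X)) :
    Hcov α ≤ logE (Fintype.card ι) + ⨆ i, Hcov (pullbackCov (f i) α) :=
  (logE_mono (Ncov_le_sum_pullbackCov hf α)).trans (logE_sum_le _)

variable [Finite ι] {S : ∀ i, Y i → Y i} {T : X → X}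

theorem htopRel_le_iSup_pullbackCov (hf : ⋃ i, range (f i) = univ)
    (h : ∀ i, Function.Semiconj (f i) (S i) T) (α : Set (Set X)) :
    htopRel T α ≤ ⨆ i, htopRel (S i) (pullbackCov (f i) α) := by
  have := Fintype.ofFinite ι
  let error (n : ℕ) : ℝ≥0∞ := logE (Fintype.card ι) / (n + 1)
  let rate (i : ι) (n : ℕ) : ℝ≥0∞ := Hcov (covProd (S i) (pullbackCov (f i) α) n) / (n + 1)
  have herror : Tendsto error atTop (𝓝 0) := by
    simpa [error] using ENNReal.Tendsto.const_div
      ((tendsto_add_atTop_iff_nat 1).2 ENNReal.tendsto_nat_nhds_top)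
      (Or.inr (logE_natCast_ne_top (Fintype.card ι)))
  have hle (n : ℕ) : Hcov (covProd T α n) / (n + 1) ≤ error n + ⨆ i, rate i n := by
    simp only [error, rate, ← ENNReal.iSup_div, ← ENNReal.add_div, ← pullbackCov_covProd (h _)]
    exact ENNReal.div_le_div_right (Hcov_le_add_iSup_pullbackCov hf _) _
  calc htopRel T α ≤ limsup (error + fun n => ⨆ i, rate i n) atTop :=
        limsup_le_limsup (Eventually.of_forall hle)
    _ = limsup (fun n => ⨆ i, rate i n) atTop := ENNReal.limsup_add_of_left_tendsto_zero herror _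
    _ = ⨆ i, htopRel (S i) (pullbackCov (f i) α) := limsup_iSup_of_finite _ _

theorem htop_le_iSup_of_semiconj [TopologicalSpace X] [∀ i, TopologicalSpace (Y i)]
    (hcont : ∀ i, Continuous (f i)) (hf : ⋃ i, range (f i) = univ)
    (h : ∀ i, Function.Semiconj (f i) (S i) T) : htop T ≤ ⨆ i, htop (S i) := by
  refine iSup₂_le fun α hα => (htopRel_le_iSup_pullbackCov hf h α).trans (iSup_mono fun i => ?_)
  exact htopRel_le_htop (S i) (hα.pullbackCov (hcont i))

end JointlySurjective

theorem semiconj_val_restrict {T : X → X} {Y : Set X} (hi : MapsTo T Y Y) :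
    Function.Semiconj Subtype.val (hi.restrict T Y Y) T :=
  fun _ => rfl

theorem ExtClosed.htop_restrict_le [TopologicalSpace X] {T : X → X} {Y : Set X}
    (hec : ExtClosed Y) (hi : MapsTo T Y Y) : htop (hi.restrict T Y Y) ≤ htop T := by
  refine iSup₂_le fun β hβ => ?_
  obtain ⟨α, hα, rfl⟩ := hec β hβ
  exact (htopRel_pullbackCov_le (semiconj_val_restrict hi) α).trans (htopRel_le_htop T hα)

theorem stmt_16_general {X ι : Type*} [TopologicalSpace X] [Finite ι] (T : X → X)
    (Y : ι → Set X) (hec : ∀ i, ExtClosed (Y i)) (hunion : ⋃ i, Y i = univ)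
    (hi : ∀ i, MapsTo T (Y i) (Y i)) :
    htop T = ⨆ i, htop ((hi i).restrict T (Y i) (Y i)) := by
  refine le_antisymm ?_ (iSup_le fun i => (hec i).htop_restrict_le (hi i))
  exact htop_le_iSup_of_semiconj (fun i => continuous_subtype_val)
    (by simpa only [Subtype.range_val] using hunion) fun i => semiconj_val_restrict (hi i)

/-- If `X = X₁ ∪ X₂` with `X₁`, `X₂` extension closed and `T`-invariant, then
`h_top(T) = max{h_top(T|_{X₁}), h_top(T|_{X₂})}`. -/
theorem stmt_16 {X : Type*} [TopologicalSpace X] (T : X → X) (hT : Continuous T)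
    (X₁ X₂ : Set X) (hec₁ : ExtClosed X₁) (hec₂ : ExtClosed X₂)
    (hunion : X₁ ∪ X₂ = univ)
    (hi₁ : MapsTo T X₁ X₁) (hi₂ : MapsTo T X₂ X₂) :
    htop T = max (htop (MapsTo.restrict T X₁ X₁ hi₁)) (htop (MapsTo.restrict T X₂ X₂ hi₂)) :=
  (stmt_16_general T (fun b => cond b X₁ X₂) (Bool.forall_bool.2 ⟨hec₂, hec₁⟩)
    (union_eq_iUnion.symm.trans hunion) (Bool.forall_bool.2 ⟨hi₂, hi₁⟩)).trans iSup_bool_eq
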